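/- arXiv:1401.7151 — 3 statements merged into one kernel-verified Lean document; each statement's English description precedes it below -/
import Mathlib

section
/- For every p ≥ 1, C_p is a C*-subalgebra of B(H) with C_{p-1} ∩ K_p = {0} and A_0 ∩ C_p = {0}, and there is a *-isomorphism φ_p from C_p onto A_{p-1} determined by e_{ij}^l ↦ e_{ij}^{l-1} for all 1 ≤ l ≤ p and all i, j ≥ 1; moreover φ_{p+1} extends φ_p. -/
/-!
Decompose `H` as the Hilbert sum of the copies `V m H`, where `V m` is the isometry sending `ξ i` to
`ξ (n i m)`, and let `Φ` be the amplification `T ↦ ⨁ T`, i.e. `T ⊗ 1`. It is an isometric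
`*`-endomorphism of `B(H)` and, being normal, satisfies `Φ (e p i j) = e (p + 1) i j` for all `p`
(`ampHom_unit`). Since `K(H)` is the closed `*`-algebra `K_0` generated by the `e 0 i j`, it follows
that `Φ(K_p) = K_{p+1}` and `Φ(A_p) = C_{p+1}` (`image_Aset`), so that every `φ_p` is the restriction
of one left inverse of `Φ`.

A compact operator tends to zero along the summands `V m H`, whence `‖T‖ ≤ ‖k + Φ T‖` for compact `k`
(`norm_le_norm_ampHom_add_compact`). This gives `K(H) ∩ C_p = 0`, and also the closedness of
`A_{p+1} = K(H) + Φ(A_p)` by induction, hence that of `C_{p+1}`. The relation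
`C_{p-1} ∩ K_p = 0` follows by induction from `A_p = K(H) + C_p` and `K(H) ∩ C_p = 0`.
-/

open Filter

open Pointwise

/-- The closed `*`-subalgebra of `B(H)` generated by `{e_{ij}^p : i, j}`. -/
noncomputable def Kset {H : Type*} [NormedAddCommGroup H] [InnerProductSpace ℂ H]
    [CompleteSpace H] (e : ℕ → ℕ → ℕ → (H →L[ℂ] H)) (p : ℕ) : Set (H →L[ℂ] H) :=
  closure ((NonUnitalStarAlgebra.adjoin ℂ {T : H →L[ℂ] H | ∃ i j, T = e p i j} :
    NonUnitalStarSubalgebra ℂ (H →L[ℂ] H)) : Set (H →L[ℂ] H))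

/-- `A_0 = K(H)` and `A_p = A_{p-1} + K_p`. -/
noncomputable def Aset {H : Type*} [NormedAddCommGroup H] [InnerProductSpace ℂ H]
    [CompleteSpace H] (e : ℕ → ℕ → ℕ → (H →L[ℂ] H)) : ℕ → Set (H →L[ℂ] H)
  | 0 => {T : H →L[ℂ] H | IsCompactOperator ⇑T}
  | (l + 1) => Aset e l + Kset e (l + 1)

/-- `C_1 = K_1` and `C_p = C_{p-1} + K_p` (with `C_0 = {0}`). -/
noncomputable def Cset {H : Type*} [NormedAddCommGroup H] [InnerProductSpace ℂ H]
    [CompleteSpace H] (e : ℕ → ℕ → ℕ → (H →L[ℂ] H)) : ℕ → Set (H →L[ℂ] H)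
  | 0 => {0}
  | (p + 1) => Cset e p + Kset e (p + 1)

set_option linter.unusedSectionVars false

/-! ### Compact operators and finite sections -/

section Compact

variable {H : Type*} [NormedAddCommGroup H] [InnerProductSpace ℂ H] [CompleteSpace H]

/-- The orthogonal projection onto the span of the first `N` basis vectors. -/
noncomputable def basisProj (ξ : HilbertBasis ℕ ℂ H) (N : ℕ) : H →L[ℂ] H :=
  ∑ i ∈ Finset.range N, InnerProductSpace.rankOne ℂ (ξ i) (ξ i)

lemma basisProj_apply (ξ : HilbertBasis ℕ ℂ H) (N : ℕ) (v : H) :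
    basisProj ξ N v = ∑ i ∈ Finset.range N, inner ℂ (ξ i) v • ξ i := by
  simp [basisProj]

lemma basisProj_tendsto (ξ : HilbertBasis ℕ ℂ H) (v : H) :
    Tendsto (fun N => basisProj ξ N v) atTop (nhds v) := by
  simpa [basisProj_apply, HilbertBasis.repr_apply_apply] using (ξ.hasSum_repr v).tendsto_sum_nat

lemma basisProj_adjoint (ξ : HilbertBasis ℕ ℂ H) (N : ℕ) :
    star (basisProj ξ N) = basisProj ξ N := by
  simp [basisProj, ContinuousLinearMap.star_eq_adjoint]

lemma basisProj_norm_le (ξ : HilbertBasis ℕ ℂ H) (N : ℕ) : ‖basisProj ξ N‖ ≤ 1 := by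
  refine ContinuousLinearMap.opNorm_le_bound _ zero_le_one fun v => ?_
  rw [one_mul]
  refine le_of_sq_le_sq ?_ (norm_nonneg v)
  have h : ‖basisProj ξ N v‖ ^ 2 = ∑ i ∈ Finset.range N, ‖inner ℂ (ξ i) v‖ ^ 2 := by
    rw [basisProj_apply, ← Complex.ofReal_inj]
    push_cast
    rw [← Complex.coe_algebraMap, ← inner_self_eq_norm_sq_to_K, ξ.orthonormal.inner_sum]
    refine Finset.sum_congr rfl fun i _ => ?_
    exact RCLike.conj_mul _
  rw [h]
  exact ξ.orthonormal.sum_inner_products_le v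

lemma isCompactOperator_rankOne (x y : H) :
    IsCompactOperator (InnerProductSpace.rankOne ℂ x y : H →L[ℂ] H) := by
  rw [InnerProductSpace.rankOne_def']
  have h : IsCompactOperator (innerSL ℂ y : H →L[ℂ] ℂ) := by
    refine ⟨_, ProperSpace.isCompact_closedBall (0 : ℂ) 1, ?_⟩
    exact (innerSL ℂ y).continuous.continuousAt.preimage_mem_nhds
      (by simpa using Metric.closedBall_mem_nhds (0 : ℂ) one_pos)
  exact h.clm_comp (ContinuousLinearMap.toSpanSingleton ℂ x)

lemma isCompactOperator_sum {ι : Type*} (s : Finset ι) (f : ι → H →L[ℂ] H)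
    (h : ∀ i ∈ s, IsCompactOperator (f i)) : IsCompactOperator (∑ i ∈ s, f i : H →L[ℂ] H) :=
  (compactOperator (RingHom.id ℂ) H H).sum_mem h

/-- Strong convergence of contractions is uniform on the relatively compact image of the ball. -/
lemma basisProj_mul_tendsto (ξ : HilbertBasis ℕ ℂ H) {k : H →L[ℂ] H} (hk : IsCompactOperator k) :
    Tendsto (fun N => basisProj ξ N * k) atTop (nhds k) := by
  obtain ⟨K, hK, hsub⟩ := hk.image_closedBall_subset_compact (f := (k : H →ₗ[ℂ] H)) 1
  rw [Metric.tendsto_atTop]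
  intro ε hε
  obtain ⟨t, -, htfin, ht⟩ := hK.totallyBounded.exists_subset
    (Metric.dist_mem_uniformity (show 0 < ε / 6 by positivity))
  have hev : ∀ᶠ N in atTop, ∀ y ∈ t, dist (basisProj ξ N y) y < ε / 6 := by
    rw [Filter.eventually_all_finite htfin]
    intro y _
    exact (Metric.tendsto_nhds.1 (basisProj_tendsto ξ y)) _ (by positivity)
  obtain ⟨N₀, hN₀⟩ := eventually_atTop.1 hev
  refine ⟨N₀, fun N hN => ?_⟩
  rw [dist_eq_norm]
  refine lt_of_le_of_lt (b := ε / 2) ?_ (by linarith)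
  refine ContinuousLinearMap.opNorm_le_of_unit_norm (by positivity) fun x hx => ?_
  have hxK : k x ∈ K := hsub ⟨x, by simp [hx], rfl⟩
  obtain ⟨y, hy, hxy⟩ := by simpa using ht hxK
  have h1 : ‖basisProj ξ N (k x - y)‖ ≤ ‖k x - y‖ := by
    simpa using (basisProj ξ N).le_of_opNorm_le (basisProj_norm_le ξ N) (k x - y)
  have h2 := hN₀ N hN y hy
  rw [dist_eq_norm] at h2 hxy
  have h3 : (basisProj ξ N * k - k) x
      = basisProj ξ N (k x - y) + (basisProj ξ N y - y) - (k x - y) := by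
    simp
  rw [h3]
  have h4 := norm_sub_le (basisProj ξ N (k x - y) + (basisProj ξ N y - y)) (k x - y)
  have h5 := norm_add_le (basisProj ξ N (k x - y)) (basisProj ξ N y - y)
  linarith

/-- Schauder's theorem for operators on a separable Hilbert space: `k = lim P_N k`, so `k*` is the
limit of the finite-rank operators `k* P_N`. -/
lemma isCompactOperator_star (ξ : HilbertBasis ℕ ℂ H) {k : H →L[ℂ] H} (hk : IsCompactOperator k) :
    IsCompactOperator (star k : H →L[ℂ] H) := by
  have h : Tendsto (fun N => star (basisProj ξ N * k)) atTop (nhds (star k)) :=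
    (continuous_star.tendsto k).comp (basisProj_mul_tendsto ξ hk)
  refine isCompactOperator_of_tendsto h (Eventually.of_forall fun N => ?_)
  rw [star_mul, basisProj_adjoint]
  exact (isCompactOperator_sum _ _ fun i _ => isCompactOperator_rankOne _ _).clm_comp (star k)

lemma mul_basisProj_tendsto (ξ : HilbertBasis ℕ ℂ H) {k : H →L[ℂ] H} (hk : IsCompactOperator k) :
    Tendsto (fun N => k * basisProj ξ N) atTop (nhds k) := by
  have h := (continuous_star.tendsto _).comp
    (basisProj_mul_tendsto ξ (isCompactOperator_star ξ hk))
  simpa [Function.comp_def, basisProj_adjoint] using h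

lemma basisProj_mul_mul_tendsto (ξ : HilbertBasis ℕ ℂ H) {k : H →L[ℂ] H}
    (hk : IsCompactOperator k) :
    Tendsto (fun N => basisProj ξ N * k * basisProj ξ N) atTop (nhds k) := by
  have h1 := basisProj_mul_tendsto ξ hk
  have h2 := mul_basisProj_tendsto ξ hk
  rw [tendsto_iff_norm_sub_tendsto_zero] at h1 h2 ⊢
  refine squeeze_zero (fun _ => norm_nonneg _) (fun N => ?_) (by simpa using h1.add h2)
  have h3 : basisProj ξ N * k * basisProj ξ N - k
      = (basisProj ξ N * k - k) + basisProj ξ N * (k * basisProj ξ N - k) := by noncomm_ring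
  rw [h3]
  refine (norm_add_le _ _).trans (add_le_add le_rfl ((norm_mul_le _ _).trans ?_))
  exact mul_le_of_le_one_left (norm_nonneg _) (basisProj_norm_le ξ N)

/-- The compact operators are the closed `*`-algebra generated by the matrix units of a
Hilbert basis. -/
lemma compact_eq_closure_adjoin (ξ : HilbertBasis ℕ ℂ H) (e : ℕ → ℕ → ℕ → (H →L[ℂ] H))
    (h0 : ∀ i j, e 0 i j = InnerProductSpace.rankOne ℂ (ξ i) (ξ j)) :
    Aset e 0 = Kset e 0 := by
  apply Set.Subset.antisymm
  · intro k hk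
    refine mem_closure_of_tendsto (basisProj_mul_mul_tendsto ξ hk) (Eventually.of_forall fun N => ?_)
    have h : basisProj ξ N * k * basisProj ξ N = ∑ i ∈ Finset.range N, ∑ j ∈ Finset.range N,
        inner ℂ (ξ i) (k (ξ j)) • e 0 i j := by
      ext v
      simp only [mul_apply_eq_comp, basisProj_apply, map_sum, map_smul,
        Finset.smul_sum, smul_smul, h0, sum_apply, smul_apply, InnerProductSpace.rankOne_apply]
      rw [Finset.sum_comm]
      exact Finset.sum_congr rfl fun i _ => Finset.sum_congr rfl fun j _ => by rw [mul_comm]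
    rw [h]
    refine sum_mem fun i _ => sum_mem fun j _ => SMulMemClass.smul_mem _ ?_
    exact NonUnitalStarAlgebra.subset_adjoin ℂ _ ⟨i, j, rfl⟩
  · refine closure_minimal (fun x hx => ?_) isClosed_setOfPred_isCompactOperator
    induction hx using NonUnitalStarAlgebra.adjoin_induction with
    | mem x hx =>
      obtain ⟨i, j, rfl⟩ := hx
      change IsCompactOperator _
      rw [h0]
      exact isCompactOperator_rankOne _ _
    | add x y _ _ hx hy => exact IsCompactOperator.add hx hy
    | zero => exact isCompactOperator_zero
    | mul x y _ _ hx hy => exact IsCompactOperator.comp_clm hx y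
    | smul r x _ hx => exact IsCompactOperator.smul hx r
    | star x _ hx => exact isCompactOperator_star ξ hx

end Compact

/-! ### Amplification along a Hilbert sum -/

section Amplification

variable {H : Type*} [NormedAddCommGroup H] [InnerProductSpace ℂ H] [CompleteSpace H]
  {V : ℕ → H →ₗᵢ[ℂ] H}

/-- Continuous linear maps on a Hilbert sum are determined by their values on the summands. -/
lemma hilbertSum_ext (hV : IsHilbertSum ℂ (fun _ : ℕ => H) V) {F : Type*} [NormedAddCommGroup F]
    [NormedSpace ℂ F] {X Y : H →L[ℂ] F} (h : ∀ m x, X (V m x) = Y (V m x)) : X = Y := by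
  ext w
  have hw := hV.hasSum_linearIsometryEquiv_symm (hV.linearIsometryEquiv w)
  rw [LinearIsometryEquiv.symm_apply_apply] at hw
  have hX := hw.mapL X
  have hY := hw.mapL Y
  simp only [h] at hX
  exact hX.unique hY

/-- The amplification `T ↦ ⨁ T`: if `H` is the Hilbert sum of the copies `V m H` of itself, `T` acts
on every copy. Identifying `H` with `H ⊗ ℓ²`, this is `T ↦ T ⊗ 1`. -/
noncomputable def amp (hV : IsHilbertSum ℂ (fun _ : ℕ => H) V) (T : H →L[ℂ] H) : H →L[ℂ] H :=
  (hV.linearIsometryEquiv.symm.toContinuousLinearEquiv : lp (fun _ : ℕ => H) 2 →L[ℂ] H) ∘L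
    lp.mapCLM 2 (fun _ : ℕ => T) (norm_nonneg T) (fun _ => le_rfl) ∘L
    (hV.linearIsometryEquiv.toContinuousLinearEquiv : H →L[ℂ] lp (fun _ : ℕ => H) 2)

lemma amp_apply_V (hV : IsHilbertSum ℂ (fun _ : ℕ => H) V) (T : H →L[ℂ] H) (m : ℕ) (x : H) :
    amp hV T (V m x) = V m (T x) := by
  have h1 : hV.linearIsometryEquiv (V m x) = lp.single 2 m x := by
    rw [← LinearIsometryEquiv.eq_symm_apply, hV.linearIsometryEquiv_symm_apply_single]
  have h2 : lp.mapCLM 2 (fun _ : ℕ => T) (norm_nonneg T) (fun _ => le_rfl)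
      (lp.single (E := fun _ : ℕ => H) 2 m x) = lp.single (E := fun _ : ℕ => H) 2 m (T x) := by
    ext i
    by_cases hi : i = m
    · subst hi; simp
    · simp [hi]
  simp [amp, h1, h2]

lemma amp_norm_le (hV : IsHilbertSum ℂ (fun _ : ℕ => H) V) (T : H →L[ℂ] H) :
    ‖amp hV T‖ ≤ ‖T‖ := by
  refine ContinuousLinearMap.opNorm_le_bound _ (norm_nonneg T) fun x => ?_
  simpa [amp] using ContinuousLinearMap.le_of_opNorm_le _
    (lp.norm_mapCLM_le 2 (fun _ : ℕ => T) (norm_nonneg T) (fun _ => le_rfl))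
    (hV.linearIsometryEquiv x)

lemma amp_star (hV : IsHilbertSum ℂ (fun _ : ℕ => H) V) (T : H →L[ℂ] H) :
    amp hV (star T) = star (amp hV T) := by
  refine hilbertSum_ext hV fun m x => ?_
  rw [amp_apply_V]
  apply (innerSL_inj (𝕜 := ℂ)).1
  refine hilbertSum_ext hV fun k y => ?_
  simp only [innerSL_apply_apply, ContinuousLinearMap.star_eq_adjoint,
    ContinuousLinearMap.adjoint_inner_left, amp_apply_V]
  by_cases hmk : m = k
  · subst hmk
    simp [ContinuousLinearMap.adjoint_inner_left]
  · rw [hV.OrthogonalFamily hmk, hV.OrthogonalFamily hmk]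

/-- Amplification as a homomorphism of `*`-algebras. -/
noncomputable def ampHom (hV : IsHilbertSum ℂ (fun _ : ℕ => H) V) :
    (H →L[ℂ] H) →⋆ₙₐ[ℂ] (H →L[ℂ] H) where
  toFun := amp hV
  map_smul' c T := hilbertSum_ext hV fun m x => by simp [amp_apply_V]
  map_zero' := hilbertSum_ext hV fun m x => by simp [amp_apply_V]
  map_add' S T := hilbertSum_ext hV fun m x => by simp [amp_apply_V]
  map_mul' S T := hilbertSum_ext hV fun m x => by simp [amp_apply_V]
  map_star' T := amp_star hV T

lemma ampHom_apply_V (hV : IsHilbertSum ℂ (fun _ : ℕ => H) V) (T : H →L[ℂ] H) (m : ℕ) (x : H) :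
    ampHom hV T (V m x) = V m (T x) := amp_apply_V hV T m x

/-- A compact operator is asymptotically zero along the summands, because each finite section
`k P_N` vanishes on all but finitely many of them. -/
lemma compact_tendsto_zero (hV : IsHilbertSum ℂ (fun _ : ℕ => H) V) (ξ : HilbertBasis ℕ ℂ H)
    (hVξ : ∀ k, ∃ m i, V m (ξ i) = ξ k) {k : H →L[ℂ] H} (hk : IsCompactOperator k) (x : H) :
    Tendsto (fun m => k (V m x)) atTop (nhds 0) := by
  choose b a hab using hVξ
  rw [Metric.tendsto_nhds]
  intro ε hε
  have hlim : Tendsto (fun N => ‖k * basisProj ξ N - k‖ * ‖x‖) atTop (nhds 0) := by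
    simpa using (tendsto_iff_norm_sub_tendsto_zero.1 (mul_basisProj_tendsto ξ hk)).mul_const ‖x‖
  obtain ⟨N, hN⟩ := (hlim.eventually_lt_const hε).exists
  have hne : ∀ᶠ m in atTop, ∀ i ∈ Finset.range N, b i ≠ m := by
    rw [Filter.eventually_all_finset]
    intro i _
    filter_upwards [eventually_gt_atTop (b i)] with m hm using hm.ne
  filter_upwards [hne] with m hm
  have hP : basisProj ξ N (V m x) = 0 := by
    rw [basisProj_apply]
    refine Finset.sum_eq_zero fun i hi => ?_
    rw [← hab i, hV.OrthogonalFamily (hm i hi), zero_smul]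
  have h1 : k (V m x) = -((k * basisProj ξ N - k) (V m x)) := by simp [hP]
  rw [dist_zero_right, h1, norm_neg]
  refine lt_of_le_of_lt ?_ hN
  simpa using (k * basisProj ξ N - k).le_opNorm (V m x)

/-- Amplified operators keep at least their norm modulo the compact operators. -/
lemma norm_le_norm_ampHom_add_compact (hV : IsHilbertSum ℂ (fun _ : ℕ => H) V)
    (ξ : HilbertBasis ℕ ℂ H) (hVξ : ∀ k, ∃ m i, V m (ξ i) = ξ k) (T : H →L[ℂ] H)
    {k : H →L[ℂ] H} (hk : IsCompactOperator k) : ‖T‖ ≤ ‖k + ampHom hV T‖ := by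
  refine ContinuousLinearMap.opNorm_le_bound _ (norm_nonneg _) fun x => ?_
  have hlim : Tendsto (fun m => ‖k + ampHom hV T‖ * ‖x‖ + ‖k (V m x)‖) atTop
      (nhds (‖k + ampHom hV T‖ * ‖x‖)) := by
    simpa using tendsto_const_nhds.add (compact_tendsto_zero hV ξ hVξ hk x).norm
  refine ge_of_tendsto' hlim fun m => ?_
  have h1 : V m (T x) = (k + ampHom hV T) (V m x) - k (V m x) := by
    simp [ampHom_apply_V]
  rw [← (V m).norm_map (T x), h1]
  refine (norm_sub_le _ _).trans (add_le_add ?_ le_rfl)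
  simpa using (k + ampHom hV T).le_opNorm (V m x)

lemma ampHom_isometry (hV : IsHilbertSum ℂ (fun _ : ℕ => H) V)
    (ξ : HilbertBasis ℕ ℂ H) (hVξ : ∀ k, ∃ m i, V m (ξ i) = ξ k) : Isometry (ampHom hV) := by
  refine AddMonoidHomClass.isometry_of_norm _ fun T => le_antisymm (amp_norm_le hV T) ?_
  simpa using norm_le_norm_ampHom_add_compact hV ξ hVξ T (k := 0) isCompactOperator_zero

end Amplification

/-! ### The Hilbert sum attached to the partition -/

section Partition

variable {H : Type*} [NormedAddCommGroup H] [InnerProductSpace ℂ H] [CompleteSpace H]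

lemma basis_ext (ξ : HilbertBasis ℕ ℂ H) {F : Type*} [NormedAddCommGroup F]
    [NormedSpace ℂ F] {X Y : H →L[ℂ] F} (h : ∀ i, X (ξ i) = Y (ξ i)) : X = Y := by
  refine ContinuousLinearMap.ext_on (s := Set.range ξ) ?_ (by rintro _ ⟨i, rfl⟩; exact h i)
  rw [dense_iff_closure_eq, ← Submodule.topologicalClosure_coe, ξ.dense_span]
  rfl

/-- A partition of `ℕ` into sequences `n i` splits `H` as the Hilbert sum of the copies
`V m H = span {ξ (n i m) : i}`. -/
lemma exists_hilbertSum (ξ : HilbertBasis ℕ ℂ H)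
    (n : ℕ → ℕ → ℕ) (hmono : ∀ p, StrictMono (n p))
    (hdisj : ∀ p q, p ≠ q → ∀ k m, n p k ≠ n q m) (hcover : ∀ k, ∃ p m, n p m = k) :
    ∃ V : ℕ → H →ₗᵢ[ℂ] H, IsHilbertSum ℂ (fun _ : ℕ => H) V ∧
      ∀ m i, V m (ξ i) = ξ (n i m) := by
  have hinj : ∀ i j m k, n i m = n j k → i = j ∧ m = k := by
    intro i j m k h
    have hij : i = j := by
      by_contra hij
      exact hdisj i j hij m k h
    subst hij
    exact ⟨rfl, (hmono i).injective h⟩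
  have hon : ∀ m, Orthonormal ℂ (fun i => ξ (n i m)) := fun m =>
    ξ.orthonormal.comp (fun i => n i m) fun i j h => (hinj i j m m h).1
  let V : ℕ → H →ₗᵢ[ℂ] H := fun m =>
    (hon m).orthogonalFamily.linearIsometry.comp ξ.repr.toLinearIsometry
  have hV : ∀ m i, V m (ξ i) = ξ (n i m) := by
    intro m i
    simp [V, HilbertBasis.repr_self, OrthogonalFamily.linearIsometry_apply_single]
  refine ⟨V, IsHilbertSum.mk ?_ ?_, hV⟩
  · intro m k hmk x y
    have h : ContinuousLinearMap.adjoint (V m).toContinuousLinearMap ∘L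
        (V k).toContinuousLinearMap = 0 := by
      refine basis_ext ξ fun i => ?_
      apply (innerSL_inj (𝕜 := ℂ)).1
      refine basis_ext ξ fun j => ?_
      simp only [innerSL_apply_apply, ContinuousLinearMap.comp_apply,
        ContinuousLinearMap.adjoint_inner_left, LinearIsometry.coe_toContinuousLinearMap, hV]
      simp only [zero_apply, inner_zero_left]
      exact ξ.orthonormal.2 fun h => hmk (hinj _ _ _ _ h).2.symm
    have h1 := congrArg (fun X : H →L[ℂ] H => inner ℂ x (X y)) h
    simpa [ContinuousLinearMap.adjoint_inner_right] using h1
  · rw [← ξ.dense_span]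
    refine Submodule.topologicalClosure_mono (Submodule.span_le.2 ?_)
    rintro _ ⟨k, rfl⟩
    obtain ⟨i, m, rfl⟩ := hcover k
    exact Submodule.mem_iSup_of_mem m ⟨ξ i, hV m i⟩

/-- Amplification shifts the level of the matrix units: it is normal, so it commutes with the
strongly convergent series defining `e (p + 1)` from `e p`. -/
lemma ampHom_unit (ξ : HilbertBasis ℕ ℂ H) (n : ℕ → ℕ → ℕ) (hmono : ∀ p, StrictMono (n p))
    (hdisj : ∀ p q, p ≠ q → ∀ k m, n p k ≠ n q m)
    (e : ℕ → ℕ → ℕ → (H →L[ℂ] H))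
    (h0 : ∀ i j k, e 0 i j (ξ k) = if k = j then ξ i else 0)
    (hrec : ∀ p i j, ∀ v : H, Filter.Tendsto
      (fun M => ∑ m ∈ Finset.range M, e p (n i m) (n j m) v)
      Filter.atTop (nhds (e (p + 1) i j v)))
    {V : ℕ → H →ₗᵢ[ℂ] H} (hV : IsHilbertSum ℂ (fun _ : ℕ => H) V)
    (hVξ : ∀ m i, V m (ξ i) = ξ (n i m)) (p i j : ℕ) :
    ampHom hV (e p i j) = e (p + 1) i j := by
  induction p generalizing i j with
  | zero =>
    refine hilbertSum_ext hV fun m x => ?_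
    rw [ampHom_apply_V]
    have hext : (V m).toContinuousLinearMap ∘L e 0 i j =
        e 1 i j ∘L (V m).toContinuousLinearMap := by
      refine basis_ext ξ fun k => ?_
      simp only [ContinuousLinearMap.comp_apply, LinearIsometry.coe_toContinuousLinearMap, hVξ, h0]
      refine tendsto_nhds_unique ?_ (hrec 0 i j (ξ (n k m)))
      simp only [h0]
      -- the only nonzero term of the series is the `m`-th one, and only when `k = j`
      refine tendsto_const_nhds.congr' ?_
      filter_upwards [eventually_gt_atTop m] with M hM
      by_cases hkj : k = j
      · subst hkj
        simp only [if_true, (hmono k).injective.eq_iff]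
        rw [Finset.sum_ite_eq, if_pos (Finset.mem_range.2 hM), hVξ]
      · rw [if_neg hkj, map_zero]
        exact (Finset.sum_eq_zero fun m' _ => if_neg (hdisj k j hkj m m')).symm
    exact congrArg (fun X : H →L[ℂ] H => X x) hext
  | succ p ih =>
    refine hilbertSum_ext hV fun m x => ?_
    rw [ampHom_apply_V]
    have h1 := ((V m).continuous.tendsto _).comp (hrec p i j x)
    refine tendsto_nhds_unique h1 ((hrec (p + 1) i j (V m x)).congr fun M => ?_)
    simp only [Function.comp_apply, map_sum]
    exact Finset.sum_congr rfl fun m' _ => by rw [← ih, ampHom_apply_V]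

end Partition

/-! ### The towers `A_p` and `C_p` -/

section Tower

variable {H : Type*} [NormedAddCommGroup H] [InnerProductSpace ℂ H] [CompleteSpace H]
  {e : ℕ → ℕ → ℕ → (H →L[ℂ] H)}

lemma image_Kset {Φ : (H →L[ℂ] H) →⋆ₙₐ[ℂ] (H →L[ℂ] H)} (hΦ : Isometry Φ)
    (hΦe : ∀ p i j, Φ (e p i j) = e (p + 1) i j) (p : ℕ) : Φ '' Kset e p = Kset e (p + 1) := by
  have himg : Φ '' {T | ∃ i j, T = e p i j} = {T | ∃ i j, T = e (p + 1) i j} := by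
    ext T
    constructor
    · rintro ⟨_, ⟨i, j, rfl⟩, rfl⟩
      exact ⟨i, j, hΦe p i j⟩
    · rintro ⟨i, j, rfl⟩
      exact ⟨_, ⟨i, j, rfl⟩, hΦe p i j⟩
  rw [Kset, Kset, ← hΦ.isClosedEmbedding.closure_image_eq, ← himg,
    ← NonUnitalStarAlgHom.map_adjoin, NonUnitalStarSubalgebra.coe_map]

/-- `C_{p+1}` is the amplification of `A_p`. -/
lemma image_Aset {Φ : (H →L[ℂ] H) →⋆ₙₐ[ℂ] (H →L[ℂ] H)} (hΦ : Isometry Φ)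
    (hΦe : ∀ p i j, Φ (e p i j) = e (p + 1) i j) (hA0 : Aset e 0 = Kset e 0) (p : ℕ) :
    Φ '' Aset e p = Cset e (p + 1) := by
  induction p with
  | zero =>
    rw [hA0, image_Kset hΦ hΦe, Cset, Cset, Set.singleton_zero]
    exact (zero_add (Kset e 1)).symm
  | succ p ih => rw [Aset, Set.image_add, ih, image_Kset hΦ hΦe, ← Cset]

lemma Aset_eq_add (p : ℕ) : Aset e p = Aset e 0 + Cset e p := by
  induction p with
  | zero => rw [Cset, Set.singleton_zero, add_zero]
  | succ p ih => rw [Cset, ← add_assoc, ← ih, ← Aset]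

/-- The sum of the ideal of compact operators and the amplification of a closed `*`-subalgebra is
a closed `*`-subalgebra: modulo the compact operators amplification is bounded below, so a Cauchy
sequence in the sum has Cauchy components. -/
lemma exists_compact_add_map (ξ : HilbertBasis ℕ ℂ H) {Φ : (H →L[ℂ] H) →⋆ₙₐ[ℂ] (H →L[ℂ] H)}
    (hΦ : Isometry Φ)
    (hbound : ∀ T k : H →L[ℂ] H, IsCompactOperator k → ‖T‖ ≤ ‖k + Φ T‖)
    (S : NonUnitalStarSubalgebra ℂ (H →L[ℂ] H)) (hS : IsClosed (S : Set (H →L[ℂ] H))) :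
    ∃ S' : NonUnitalStarSubalgebra ℂ (H →L[ℂ] H),
      (S' : Set (H →L[ℂ] H)) = {T : H →L[ℂ] H | IsCompactOperator T} + Φ '' S ∧
      IsClosed (S' : Set (H →L[ℂ] H)) := by
  let S' : NonUnitalStarSubalgebra ℂ (H →L[ℂ] H) :=
    { carrier := {T : H →L[ℂ] H | IsCompactOperator T} + Φ '' S
      zero_mem' := ⟨0, isCompactOperator_zero, 0, ⟨0, S.zero_mem, map_zero Φ⟩, add_zero 0⟩
      add_mem' := by
        rintro _ _ ⟨k, hk, _, ⟨a, ha, rfl⟩, rfl⟩ ⟨l, hl, _, ⟨b, hb, rfl⟩, rfl⟩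
        exact ⟨k + l, IsCompactOperator.add hk hl, _, ⟨a + b, S.add_mem ha hb, rfl⟩, by
          simp only [map_add]; abel⟩
      mul_mem' := by
        rintro _ _ ⟨k, hk, _, ⟨a, ha, rfl⟩, rfl⟩ ⟨l, hl, _, ⟨b, hb, rfl⟩, rfl⟩
        refine ⟨k * (l + Φ b) + Φ a * l, ?_, _, ⟨a * b, S.mul_mem ha hb, rfl⟩, ?_⟩
        · exact IsCompactOperator.add (IsCompactOperator.comp_clm hk (l + Φ b))
            (IsCompactOperator.clm_comp hl (Φ a))
        · simp only [map_mul]; noncomm_ring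
      smul_mem' := by
        rintro c _ ⟨k, hk, _, ⟨a, ha, rfl⟩, rfl⟩
        exact ⟨c • k, IsCompactOperator.smul hk c, _, ⟨c • a, SMulMemClass.smul_mem c ha, rfl⟩, by
          simp [map_smul]⟩
      star_mem' := by
        rintro _ ⟨k, hk, _, ⟨a, ha, rfl⟩, rfl⟩
        exact ⟨star k, isCompactOperator_star ξ hk, _, ⟨star a, star_mem ha, rfl⟩, by
          simp [map_star]⟩ }
  refine ⟨S', rfl, ?_⟩
  apply IsSeqClosed.isClosed
  intro x y hx hxy
  choose k hk w hw hkw using hx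
  choose a ha haw using hw
  obtain rfl : w = fun i => Φ (a i) := funext fun i => (haw i).symm
  have hcau : CauchySeq a := by
    rw [Metric.cauchySeq_iff]
    intro ε hε
    obtain ⟨N, hN⟩ := Metric.cauchySeq_iff.1 hxy.cauchySeq ε hε
    refine ⟨N, fun i hi j hj => lt_of_le_of_lt ?_ (hN i hi j hj)⟩
    rw [dist_eq_norm, dist_eq_norm]
    have h := hbound (a i - a j) (k i - k j) (IsCompactOperator.sub (hk i) (hk j))
    have heq : k i - k j + Φ (a i - a j) = x i - x j := by
      rw [← hkw i, ← hkw j]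
      simp only [map_sub]
      abel
    rwa [heq] at h
  obtain ⟨b, hb⟩ := cauchySeq_tendsto_of_complete hcau
  have hbS : b ∈ S := hS.mem_of_tendsto hb (Eventually.of_forall ha)
  have hkl : Tendsto k atTop (nhds (y - Φ b)) := by
    refine (hxy.sub ((hΦ.continuous.tendsto b).comp hb)).congr fun i => ?_
    rw [← hkw i]
    exact add_sub_cancel_right _ _
  refine ⟨y - Φ b, isCompactOperator_of_tendsto hkl (Eventually.of_forall hk), Φ b, ⟨b, hbS, rfl⟩,
    sub_add_cancel y (Φ b)⟩

lemma exists_Aset_subalgebra (ξ : HilbertBasis ℕ ℂ H) {Φ : (H →L[ℂ] H) →⋆ₙₐ[ℂ] (H →L[ℂ] H)}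
    (hΦ : Isometry Φ) (hΦe : ∀ p i j, Φ (e p i j) = e (p + 1) i j) (hA0 : Aset e 0 = Kset e 0)
    (hbound : ∀ T k : H →L[ℂ] H, IsCompactOperator k → ‖T‖ ≤ ‖k + Φ T‖) (p : ℕ) :
    ∃ S : NonUnitalStarSubalgebra ℂ (H →L[ℂ] H),
      (S : Set (H →L[ℂ] H)) = Aset e p ∧ IsClosed (S : Set (H →L[ℂ] H)) := by
  induction p with
  | zero =>
    rw [hA0]
    exact ⟨(NonUnitalStarAlgebra.adjoin ℂ {T : H →L[ℂ] H | ∃ i j, T = e 0 i j}).topologicalClosure,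
      rfl, isClosed_closure⟩
  | succ p ih =>
    obtain ⟨S, hS, hSc⟩ := ih
    obtain ⟨S', hS', hc⟩ := exists_compact_add_map ξ hΦ hbound S hSc
    exact ⟨S', by rw [hS', hS, image_Aset hΦ hΦe hA0, Aset_eq_add (p + 1)]; rfl, hc⟩

lemma Cset_compact_eq_zero {Φ : (H →L[ℂ] H) →⋆ₙₐ[ℂ] (H →L[ℂ] H)} (hΦ : Isometry Φ)
    (hΦe : ∀ p i j, Φ (e p i j) = e (p + 1) i j) (hA0 : Aset e 0 = Kset e 0)
    (hbound : ∀ T k : H →L[ℂ] H, IsCompactOperator k → ‖T‖ ≤ ‖k + Φ T‖) (p : ℕ)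
    {x : H →L[ℂ] H} (hx : x ∈ Cset e (p + 1)) (hxc : IsCompactOperator x) : x = 0 := by
  rw [← image_Aset hΦ hΦe hA0] at hx
  obtain ⟨T, -, rfl⟩ := hx
  have h := hbound T (-Φ T) hxc.neg
  rw [neg_add_cancel, norm_zero, norm_le_zero_iff] at h
  rw [h, map_zero]

/-- Writing `x ∈ C_{p+1} ∩ K_{p+2}` as `Φ T` with `T ∈ A_p ∩ K_{p+1}`, the compact part of `T`
lies in `C_{p+1}`, hence vanishes, and `T ∈ C_p ∩ K_{p+1} = 0` by induction. -/
lemma Cset_inter_Kset {Φ : (H →L[ℂ] H) →⋆ₙₐ[ℂ] (H →L[ℂ] H)} (hΦ : Isometry Φ)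
    (hΦe : ∀ p i j, Φ (e p i j) = e (p + 1) i j) (hA0 : Aset e 0 = Kset e 0)
    (hbound : ∀ T k : H →L[ℂ] H, IsCompactOperator k → ‖T‖ ≤ ‖k + Φ T‖)
    (hneg : ∀ p, ∀ x ∈ Cset e p, -x ∈ Cset e p) (p : ℕ)
    {x : H →L[ℂ] H} (hx : x ∈ Cset e p) (hxK : x ∈ Kset e (p + 1)) : x = 0 := by
  induction p generalizing x with
  | zero => exact hx
  | succ p ih =>
    rw [← image_Aset hΦ hΦe hA0] at hx
    obtain ⟨T, hT, rfl⟩ := hx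
    rw [← image_Kset hΦ hΦe, hΦ.injective.mem_set_image] at hxK
    have hT' := hT
    rw [Aset_eq_add] at hT'
    obtain ⟨k, hk, c, hc, rfl⟩ := hT'
    have hkC : k ∈ Cset e (p + 1) := by
      rw [Cset]
      exact ⟨-c, hneg p c hc, k + c, hxK, by change -c + (k + c) = k; abel⟩
    obtain rfl : k = 0 := Cset_compact_eq_zero hΦ hΦe hA0 hbound p hkC hk
    simp only [zero_add] at hxK ⊢
    rw [ih hc hxK, map_zero]

end Tower

/-- for every `p ≥ 1`, `C_p` is a C*-subalgebra of `B(H)` with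
`C_{p-1} ∩ K_p = {0}` and `A_0 ∩ C_p = {0}`, and there is a `*`-isomorphism
`φ_p : C_p → A_{p-1}` determined by `e_{ij}^l ↦ e_{ij}^{l-1}` (`1 ≤ l ≤ p`);
moreover `φ_{p+1}` extends `φ_p`. -/
theorem Cp_structure_and_isos
    {H : Type*} [NormedAddCommGroup H] [InnerProductSpace ℂ H] [CompleteSpace H]
    (ξ : HilbertBasis ℕ ℂ H)
    (n : ℕ → ℕ → ℕ) (hmono : ∀ p, StrictMono (n p))
    (hdisj : ∀ p q, p ≠ q → ∀ k m, n p k ≠ n q m)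
    (hcover : ∀ k, ∃ p m, n p m = k)
    (e : ℕ → ℕ → ℕ → (H →L[ℂ] H))
    (h0 : ∀ i j k, e 0 i j (ξ k) = if k = j then ξ i else 0)
    (hrec : ∀ p i j, ∀ v : H, Filter.Tendsto
      (fun M => ∑ m ∈ Finset.range M, e p (n i m) (n j m) v)
      Filter.atTop (nhds (e (p + 1) i j v)))
    :
    ∃ φ : ℕ → (H →L[ℂ] H) → (H →L[ℂ] H), ∀ p : ℕ, 1 ≤ p →
      (∃ S : NonUnitalStarSubalgebra ℂ (H →L[ℂ] H),
        (S : Set (H →L[ℂ] H)) = Cset e p ∧ IsClosed (Cset e p)) ∧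
      (∀ x ∈ Cset e (p - 1), x ∈ Kset e p → x = 0) ∧
      (∀ x ∈ Cset e p, IsCompactOperator ⇑x → x = 0) ∧
      (∀ x ∈ Cset e p, ∀ y ∈ Cset e p,
        φ p (x + y) = φ p x + φ p y ∧ φ p (x * y) = φ p x * φ p y) ∧
      (∀ c : ℂ, ∀ x ∈ Cset e p, φ p (c • x) = c • φ p x) ∧
      (∀ x ∈ Cset e p, φ p (star x) = star (φ p x)) ∧
      Set.InjOn (φ p) (Cset e p) ∧
      (φ p) '' (Cset e p) = Aset e (p - 1) ∧
      (∀ l : ℕ, 1 ≤ l → l ≤ p → ∀ i j : ℕ, φ p (e l i j) = e (l - 1) i j) ∧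
      (∀ x ∈ Cset e p, φ (p + 1) x = φ p x) := by
  obtain ⟨V, hV, hVn⟩ := exists_hilbertSum ξ n hmono hdisj hcover
  have hVξ : ∀ k, ∃ m i, V m (ξ i) = ξ k := by
    intro k
    obtain ⟨i, m, rfl⟩ := hcover k
    exact ⟨m, i, hVn m i⟩
  have hΦ := ampHom_isometry hV ξ hVξ
  have hbound : ∀ T k : H →L[ℂ] H, IsCompactOperator k → ‖T‖ ≤ ‖k + ampHom hV T‖ :=
    fun T k hk => norm_le_norm_ampHom_add_compact hV ξ hVξ T hk
  have hΦe := ampHom_unit ξ n hmono hdisj e h0 hrec hV hVn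
  generalize ampHom hV = Φ at hΦ hbound hΦe
  have hrank : ∀ i j, e 0 i j = InnerProductSpace.rankOne ℂ (ξ i) (ξ j) := by
    intro i j
    refine basis_ext ξ fun k => ?_
    rw [h0, InnerProductSpace.rankOne_apply, orthonormal_iff_ite.1 ξ.orthonormal j k]
    simp [eq_comm]
  have hA0 := compact_eq_closure_adjoin ξ e hrank
  have hCA := image_Aset hΦ hΦe hA0
  have hCalg : ∀ p, ∃ S : NonUnitalStarSubalgebra ℂ (H →L[ℂ] H),
      (S : Set (H →L[ℂ] H)) = Cset e (p + 1) ∧ IsClosed (Cset e (p + 1)) := by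
    intro p
    obtain ⟨S, hS, hSc⟩ := exists_Aset_subalgebra ξ hΦ hΦe hA0 hbound p
    refine ⟨S.map Φ, by rw [NonUnitalStarSubalgebra.coe_map, hS, hCA], ?_⟩
    rw [← hCA, ← hS]
    exact hΦ.isClosedEmbedding.isClosedMap _ hSc
  have hneg : ∀ p, ∀ x ∈ Cset e p, -x ∈ Cset e p := by
    rintro (_ | p) x hx
    · rw [show x = 0 from hx, neg_zero]
      rfl
    · obtain ⟨S, hS, -⟩ := hCalg p
      rw [← hS] at hx ⊢
      exact neg_mem hx
  -- a single left inverse of the amplification serves for all levels at once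
  obtain ⟨ψ, hψ⟩ := hΦ.injective.hasLeftInverse
  refine ⟨fun _ => ψ, fun p hp => ?_⟩
  obtain ⟨p, rfl⟩ : ∃ q, p = q + 1 := ⟨p - 1, by omega⟩
  simp only [Nat.add_sub_cancel]
  refine ⟨hCalg p, fun x hx hxK => Cset_inter_Kset hΦ hΦe hA0 hbound hneg p hx hxK,
    fun x hx hxc => Cset_compact_eq_zero hΦ hΦe hA0 hbound p hx hxc, ?_, ?_, ?_, ?_, ?_, ?_,
    fun _ _ => trivial⟩
  · rw [← hCA]
    rintro _ ⟨S, -, rfl⟩ _ ⟨T, -, rfl⟩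
    rw [← map_add, ← map_mul]
    simp only [hψ _, and_self]
  · rw [← hCA]
    rintro c _ ⟨S, -, rfl⟩
    rw [← map_smul, hψ, hψ]
  · rw [← hCA]
    rintro _ ⟨S, -, rfl⟩
    rw [← map_star, hψ, hψ]
  · rw [← hCA]
    rintro _ ⟨S, -, rfl⟩ _ ⟨T, -, rfl⟩ h
    rw [hψ, hψ] at h
    rw [h]
  · rw [← hCA, hψ.image_image]
  · rintro l hl - i j
    obtain ⟨l, rfl⟩ : ∃ q, l = q + 1 := ⟨l - 1, by omega⟩
    rw [← hΦe, hψ, Nat.add_sub_cancel]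
end

section
/- Let A be the norm closure of ⋃_{p≥0} A_p and C the norm closure of ⋃_{p≥1} C_p in B(H). Then A_0 ∩ C = {0}, the quotient map A → A/A_0 is isometric on C (i.e. ‖c + a‖ ≥ ‖c‖ for every c ∈ C and a ∈ A_0), and every x ∈ A admits a unique decomposition x = x^0 + x^C with x^0 ∈ A_0 and x^C ∈ C; moreover the map x ↦ x^C is a *-homomorphism satisfying ‖x^C‖ ≤ ‖x‖ and ‖x^0‖ ≤ 2‖x‖. -/
/-!
The levels of the construction are related by one ampliation. Let `W m` be the isometry with
`W m (ξ i) = ξ (n i m)`. The `S_p` partition the index set, so the ranges of the `W m` are pairwise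
orthogonal and together span `H`, i.e. `∑ m, ‖(W m)† v‖² = ‖v‖²` (`hasSum_norm_sq_adjoint`).
By induction on `p`, `e (p+1) i j ∘ W m = W m ∘ e p i j` for all `m`
(`matrixUnit_intertwines`), so every `e (p+1) i j` is the block diagonal operator
`∑ m, W m ∘ T ∘ (W m)†` with `T = e p i j`. The block diagonal operators with constant block form a
norm closed `*`-subalgebra `ampliation W`, which therefore contains `C`, and
`‖c‖ = ‖T‖` there.

On the other hand `W m v → 0` weakly, so a compact operator `a` satisfies
`⟪W m w, a (W m v)⟫ → 0` (`IsCompactOperator.asympNull`). For `c` in the ampliation with block `T`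
the numbers `⟪W m w, c (W m v)⟫ = ⟪w, T v⟫` do not depend on `m`, so letting `m → ∞` recovers `T`
from `c + a` and gives `‖c‖ = ‖T‖ ≤ ‖c + a‖` (`norm_le_norm_add`). This yields
`A_0 ∩ C = {0}`, the isometry of the quotient map on `C`, uniqueness of the decomposition, and, by
passing to limits of Cauchy sequences, its existence on all of `A` (`exists_decomposition`).

The map `π` is defined on every `x` that differs from some `c ∈ ampliation W` by an asymptotically
null operator. This domain is visibly closed under sums, scalars and adjoints, so neither the
compactness of adjoints of compact operators nor the fact that `C` is an algebra is needed: the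
algebraic identities follow from uniqueness of the block diagonal part.
-/

open Filter

open Pointwise

open scoped InnerProductSpace

section Ampliation

set_option linter.unusedSectionVars false

variable {H : Type*} [NormedAddCommGroup H] [InnerProductSpace ℂ H] [CompleteSpace H]

/-! ### The isometries `W m` -/

theorem HilbertBasis.hasSum_norm_sq_inner (ξ : HilbertBasis ℕ ℂ H) (v : H) :
    HasSum (fun k => ‖⟪ξ k, v⟫_ℂ‖ ^ 2) (‖v‖ ^ 2) := by
  have h := (ξ.hasSum_inner_mul_inner v v).mapL Complex.reCLM
  have h2 : Complex.reCLM ⟪v, v⟫_ℂ = ‖v‖ ^ 2 := by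
    rw [inner_self_eq_norm_sq_to_K]
    norm_cast
  rw [h2] at h
  convert h using 2 with k
  rw [← inner_conj_symm v (ξ k), Complex.conj_mul']
  norm_cast

theorem exists_isometry (ξ : HilbertBasis ℕ ℂ H) (f : ℕ → ℕ) (hf : Function.Injective f) :
    ∃ W : H →ₗᵢ[ℂ] H, ∀ i, W (ξ i) = ξ (f i) := by
  have ho : Orthonormal ℂ (fun i => ξ (f i)) := ξ.orthonormal.comp f hf
  refine ⟨ho.orthogonalFamily.linearIsometry.comp ξ.repr.toLinearIsometry, fun i => ?_⟩
  classical
  simp [HilbertBasis.repr_self, OrthogonalFamily.linearIsometry_apply_single]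

/-- The isometries `W m` have orthogonal ranges that together span `H`, in Parseval form. -/
def IsPartition (W : ℕ → H →ₗᵢ[ℂ] H) : Prop :=
  ∀ v, HasSum (fun m => ‖ContinuousLinearMap.adjoint (W m).toContinuousLinearMap v‖ ^ 2) (‖v‖ ^ 2)

theorem hasSum_norm_sq_adjoint (ξ : HilbertBasis ℕ ℂ H) (n : ℕ → ℕ → ℕ)
    (hinj : ∀ p, Function.Injective (n p))
    (hdisj : ∀ p q, p ≠ q → ∀ k m, n p k ≠ n q m)
    (hcover : ∀ k, ∃ p m, n p m = k)
    (W : ℕ → H →ₗᵢ[ℂ] H) (hW : ∀ m i, W m (ξ i) = ξ (n i m)) : IsPartition W := by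
  intro v
  have hbij : Function.Bijective (fun q : ℕ × ℕ => n q.2 q.1) := by
    constructor
    · rintro ⟨m, i⟩ ⟨m', i'⟩ h
      by_cases hi : i = i'
      · subst hi
        exact Prod.ext (hinj i h) rfl
      · exact absurd h (hdisj i i' hi m m')
    · intro k
      obtain ⟨p, m, h⟩ := hcover k
      exact ⟨(m, p), h⟩
  have h1 := (Equiv.ofBijective _ hbij).hasSum_iff.mpr (ξ.hasSum_norm_sq_inner v)
  refine h1.prod_fiberwise (fun m => ?_)
  have h2 := ξ.hasSum_norm_sq_inner (ContinuousLinearMap.adjoint (W m).toContinuousLinearMap v)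
  convert h2 using 4 with i
  simp [ContinuousLinearMap.adjoint_inner_right, hW]

/-! ### Asymptotically null operators -/

/-- The compressions `(W m)† ∘ a ∘ W m` tend to `0` in the weak operator topology. -/
def AsympNull (W : ℕ → H →ₗᵢ[ℂ] H) (a : H →L[ℂ] H) : Prop :=
  ∀ v w, Tendsto (fun m => ⟪W m w, a (W m v)⟫_ℂ) atTop (nhds 0)

variable {W : ℕ → H →ₗᵢ[ℂ] H}

theorem AsympNull.add {a b : H →L[ℂ] H} (ha : AsympNull W a) (hb : AsympNull W b) :
    AsympNull W (a + b) := fun v w => by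
  simpa [inner_add_right] using (ha v w).add (hb v w)

theorem AsympNull.smul {a : H →L[ℂ] H} (z : ℂ) (ha : AsympNull W a) :
    AsympNull W (z • a) := fun v w => by
  simpa [inner_smul_right] using (ha v w).const_mul z

theorem AsympNull.sub {a b : H →L[ℂ] H} (ha : AsympNull W a) (hb : AsympNull W b) :
    AsympNull W (a - b) := fun v w => by
  simpa [inner_sub_right] using (ha v w).sub (hb v w)

theorem AsympNull.star {a : H →L[ℂ] H} (ha : AsympNull W a) : AsympNull W (star a) := fun v w => by
  have h := (Complex.continuous_conj.tendsto 0).comp (ha w v)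
  simp only [map_zero] at h
  refine h.congr fun m => ?_
  simp [ContinuousLinearMap.star_eq_adjoint, ContinuousLinearMap.adjoint_inner_right]

theorem IsPartition.tendsto_adjoint (hP : IsPartition W) (u : H) :
    Tendsto (fun m => ContinuousLinearMap.adjoint (W m).toContinuousLinearMap u) atTop (nhds 0) := by
  have h := (hP u).summable.tendsto_atTop_zero
  rw [tendsto_zero_iff_norm_tendsto_zero]
  simpa using h.sqrt

/-- A compact operator maps the weakly null sequence `W m v` to a norm null sequence. -/
theorem IsPartition.tendsto_compact (hP : IsPartition W) {a : H →L[ℂ] H}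
    (ha : IsCompactOperator ⇑a) (v : H) : Tendsto (fun m => a (W m v)) atTop (nhds 0) := by
  have hK := ha.isCompact_closure_image_closedBall (f := (a : H →ₗ[ℂ] H)) ‖v‖
  refine hK.tendsto_nhds_of_unique_mapClusterPt
    (Eventually.of_forall fun m => subset_closure ⟨W m v, by simp, rfl⟩) fun y _ hy => ?_
  -- `⟪y, a (W m v)⟫ → 0` by weak nullity, while it clusters at `⟪y, y⟫`.
  have hlim : Tendsto (fun m => ⟪y, a (W m v)⟫_ℂ) atTop (nhds 0) := by
    have h := (hP.tendsto_adjoint (ContinuousLinearMap.adjoint a y)).inner (𝕜 := ℂ) (tendsto_const_nhds (x := v))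
    simpa [ContinuousLinearMap.adjoint_inner_left] using h
  have hc : MapClusterPt ⟪y, y⟫_ℂ atTop (fun m => ⟪y, a (W m v)⟫_ℂ) :=
    hy.continuousAt_comp (f := fun z => ⟪y, z⟫_ℂ) (by fun_prop)
  have h0 : ⟪y, y⟫_ℂ = 0 := by
    have hne : (nhds ⟪y, y⟫_ℂ ⊓ nhds 0).NeBot := ClusterPt.mono hc hlim
    exact eq_of_nhds_neBot hne
  exact inner_self_eq_zero.mp h0

theorem IsCompactOperator.asympNull (hP : IsPartition W) {a : H →L[ℂ] H}
    (ha : IsCompactOperator ⇑a) : AsympNull W a := fun v w => by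
  have h := (hP.tendsto_compact ha v).norm.const_mul ‖w‖
  rw [norm_zero, mul_zero] at h
  refine squeeze_zero_norm (fun m => ?_) h
  simpa using norm_inner_le_norm (𝕜 := ℂ) (W m w) (a (W m v))

/-! ### The ampliation -/

/-- `c` acts as `T` on each of the copies `range (W m)` of `H`. -/
def Intertwines (W : ℕ → H →ₗᵢ[ℂ] H) (c T : H →L[ℂ] H) : Prop :=
  ∀ m v, c (W m v) = W m (T v)

/-- The `*`-algebra of operators `∑ m, W m ∘ T ∘ (W m)†` with `T ∈ B(H)`. The condition on
adjoints says that the ranges of the `W m` reduce `c`. -/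
def ampliation (W : ℕ → H →ₗᵢ[ℂ] H) : NonUnitalStarSubalgebra ℂ (H →L[ℂ] H) where
  carrier := {c | ∃ T, Intertwines W c T ∧ Intertwines W (star c) (star T)}
  zero_mem' := ⟨0, fun m v => by simp, fun m v => by simp⟩
  add_mem' := by
    rintro c d ⟨T, h1, h2⟩ ⟨S, h3, h4⟩
    exact ⟨T + S, fun m v => by simp [h1 m v, h3 m v],
      fun m v => by simp only [star_add, add_apply, h2 m v, h4 m v, map_add]⟩
  mul_mem' := by
    rintro c d ⟨T, h1, h2⟩ ⟨S, h3, h4⟩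
    exact ⟨T * S, fun m v => by simp [h1 m _, h3 m v],
      fun m v => by simp only [star_mul, mul_apply_eq_comp, h2 m _, h4 m _]⟩
  smul_mem' := by
    rintro z c ⟨T, h1, h2⟩
    exact ⟨z • T, fun m v => by simp [h1 m v],
      fun m v => by simp only [star_smul, smul_apply, h2 m v, map_smul]⟩
  star_mem' := by
    rintro c ⟨T, h1, h2⟩
    exact ⟨star T, h2, by simpa using h1⟩

theorem mem_ampliation {c : H →L[ℂ] H} :
    c ∈ ampliation W ↔ ∃ T, Intertwines W c T ∧ Intertwines W (star c) (star T) := Iff.rfl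

theorem Intertwines.adjoint_apply {c T : H →L[ℂ] H} (h : Intertwines W (star c) (star T))
    (m : ℕ) (v : H) :
    ContinuousLinearMap.adjoint (W m).toContinuousLinearMap (c v) = T (ContinuousLinearMap.adjoint (W m).toContinuousLinearMap v) := by
  refine ext_inner_left ℂ fun w => ?_
  rw [ContinuousLinearMap.adjoint_inner_right, ← ContinuousLinearMap.adjoint_inner_left,
    ← ContinuousLinearMap.adjoint_inner_left T, ContinuousLinearMap.adjoint_inner_right]
  exact congrArg (fun z => ⟪z, v⟫_ℂ) (h m w)

theorem norm_le_block (hP : IsPartition W) {c T : H →L[ℂ] H}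
    (h : Intertwines W (star c) (star T)) : ‖c‖ ≤ ‖T‖ := by
  refine c.opNorm_le_bound (norm_nonneg _) fun v => ?_
  refine le_of_sq_le_sq ?_ (by positivity)
  rw [mul_pow]
  refine hasSum_le (fun m => ?_) (hP (c v)) ((hP v).mul_left (‖T‖ ^ 2))
  rw [h.adjoint_apply, ← mul_pow]
  gcongr
  exact T.le_opNorm _

/-- The block of `c` is determined by the limit of the compressions of `c + a`. -/
theorem norm_le_norm_add (hP : IsPartition W) {c a : H →L[ℂ] H} (hc : c ∈ ampliation W)
    (ha : AsympNull W a) : ‖c‖ ≤ ‖c + a‖ := by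
  obtain ⟨T, h1, h2⟩ := hc
  refine (norm_le_block hP h2).trans (T.opNorm_le_bound (norm_nonneg _) fun v => ?_)
  have hlim : Tendsto (fun m => ⟪W m (T v), (c + a) (W m v)⟫_ℂ) atTop
      (nhds ⟪T v, T v⟫_ℂ) := by
    have h := (ha v (T v)).const_add ⟪T v, T v⟫_ℂ
    rw [add_zero] at h
    refine h.congr fun m => ?_
    rw [add_apply, inner_add_right, h1 m v, LinearIsometry.inner_map_map]
  have hb : ‖⟪T v, T v⟫_ℂ‖ ≤ ‖T v‖ * (‖c + a‖ * ‖v‖) := by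
    refine le_of_tendsto hlim.norm (Eventually.of_forall fun m => ?_)
    refine (norm_inner_le_norm _ _).trans ?_
    rw [(W m).norm_map]
    gcongr
    simpa using (c + a).le_opNorm (W m v)
  rw [inner_self_eq_norm_sq_to_K] at hb
  rcases eq_or_lt_of_le (norm_nonneg (T v)) with h0 | h0
  · rw [← h0]; positivity
  · refine le_of_mul_le_mul_left ?_ h0
    simpa [sq] using hb

theorem isClosed_ampliation (W : ℕ → H →ₗᵢ[ℂ] H) :
    IsClosed (ampliation W : Set (H →L[ℂ] H)) := by
  -- The block of `c` is necessarily its compression to the range of `W 0`.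
  have key : (ampliation W : Set (H →L[ℂ] H)) =
      {c | ∀ m v, c (W m v) = W m (ContinuousLinearMap.adjoint (W 0).toContinuousLinearMap (c (W 0 v))) ∧
        (star c) (W m v) = W m (ContinuousLinearMap.adjoint (W 0).toContinuousLinearMap ((star c) (W 0 v)))} := by
    have hW : ∀ u, ContinuousLinearMap.adjoint (W 0).toContinuousLinearMap (W 0 u) = u := fun u =>
      ext_inner_left ℂ fun w => by simp [ContinuousLinearMap.adjoint_inner_right]
    ext c
    constructor
    · rintro ⟨T, h1, h2⟩ m v
      rw [h1, h1, h2, h2, hW, hW]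
      exact ⟨rfl, rfl⟩
    · intro h
      refine ⟨ContinuousLinearMap.adjoint (W 0).toContinuousLinearMap ∘L c ∘L (W 0).toContinuousLinearMap,
        fun m v => (h m v).1, fun m v => (h m v).2.trans ?_⟩
      simp [ContinuousLinearMap.star_eq_adjoint, ContinuousLinearMap.adjoint_comp]
  rw [key]
  simp only [Set.ofPred_forall, Set.ofPred_and]
  have happ : ∀ v : H, Continuous fun c : H →L[ℂ] H => c v := fun v => by fun_prop
  have hstar : ∀ v : H, Continuous fun c : H →L[ℂ] H => (star c) v :=
    fun v => (happ v).comp continuous_star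
  refine isClosed_iInter fun m => isClosed_iInter fun v => IsClosed.inter ?_ ?_
  · exact isClosed_eq (happ _) ((W m).continuous.comp
      ((ContinuousLinearMap.continuous _).comp (happ _)))
  · exact isClosed_eq (hstar _) ((W m).continuous.comp
      ((ContinuousLinearMap.continuous _).comp (hstar _)))

theorem AsympNull.mul_mem {a c : H →L[ℂ] H} (ha : AsympNull W a) (hc : c ∈ ampliation W) :
    AsympNull W (a * c) := by
  obtain ⟨T, h1, -⟩ := hc
  intro v w
  refine (ha (T v) w).congr fun m => ?_
  rw [mul_apply_eq_comp, h1]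

theorem AsympNull.mem_mul {a c : H →L[ℂ] H} (ha : AsympNull W a) (hc : c ∈ ampliation W) :
    AsympNull W (c * a) := by
  simpa using (ha.star.mul_mem (star_mem hc)).star

theorem eq_of_asympNull_sub (hP : IsPartition W) {x c d : H →L[ℂ] H} (hc : c ∈ ampliation W)
    (hd : d ∈ ampliation W) (hxc : AsympNull W (x - c)) (hxd : AsympNull W (x - d)) : c = d := by
  have h := norm_le_norm_add hP (sub_mem hc hd) (hxc.sub hxd)
  rw [show c - d + (x - c - (x - d)) = 0 by abel, norm_zero] at h
  exact sub_eq_zero.mp (norm_le_zero_iff.mp h)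

open Classical in
/-- The block diagonal part of `x`: the element of the ampliation from which `x` differs by an
asymptotically null operator, and `0` if there is none. -/
noncomputable def diagPart (W : ℕ → H →ₗᵢ[ℂ] H) (x : H →L[ℂ] H) : H →L[ℂ] H :=
  if h : ∃ c ∈ ampliation W, AsympNull W (x - c) then h.choose else 0

theorem diagPart_eq (hP : IsPartition W) {x c : H →L[ℂ] H} (hc : c ∈ ampliation W)
    (hx : AsympNull W (x - c)) : diagPart W x = c := by
  have h : ∃ c ∈ ampliation W, AsympNull W (x - c) := ⟨c, hc, hx⟩
  rw [diagPart, dif_pos h]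
  exact eq_of_asympNull_sub hP h.choose_spec.1 hc h.choose_spec.2 hx

/-! ### The matrix units lie in the ampliation -/

theorem matrixUnit_intertwines (ξ : HilbertBasis ℕ ℂ H) (n : ℕ → ℕ → ℕ)
    (hinj : ∀ p, Function.Injective (n p))
    (hdisj : ∀ p q, p ≠ q → ∀ k m, n p k ≠ n q m)
    (e : ℕ → ℕ → ℕ → (H →L[ℂ] H))
    (h0 : ∀ i j k, e 0 i j (ξ k) = if k = j then ξ i else 0)
    (hrec : ∀ p i j, ∀ v : H, Filter.Tendsto
      (fun M => ∑ m ∈ Finset.range M, e p (n i m) (n j m) v)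
      Filter.atTop (nhds (e (p + 1) i j v)))
    (hW : ∀ m i, W m (ξ i) = ξ (n i m)) (p i j : ℕ) :
    Intertwines W (e (p + 1) i j) (e p i j) := by
  induction p generalizing i j with
  | zero =>
    intro m
    suffices h : e 1 i j ∘L (W m).toContinuousLinearMap =
        (W m).toContinuousLinearMap ∘L e 0 i j from fun v => congrArg (fun f => f v) h
    refine ContinuousLinearMap.ext_on
      (Submodule.dense_iff_topologicalClosure_eq_top.mpr ξ.dense_span) ?_
    rintro _ ⟨k, rfl⟩
    simp only [ContinuousLinearMap.comp_apply, LinearIsometry.coe_toContinuousLinearMap, hW, h0]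
    refine tendsto_nhds_unique (hrec 0 i j (ξ (n k m))) ?_
    -- Only the summand of index `m` survives, and only if `k = j`.
    refine tendsto_const_nhds.congr' ?_
    filter_upwards [eventually_gt_atTop m] with M hM
    simp only [h0]
    by_cases hk : k = j
    · subst hk
      rw [Finset.sum_eq_single m]
      · simp [hW]
      · intro b _ hb
        rw [if_neg fun h => hb (hinj k h).symm]
      · intro h
        exact absurd (Finset.mem_range.mpr hM) h
    · rw [if_neg hk, map_zero, Finset.sum_eq_zero]
      intro b _
      rw [if_neg (hdisj k j hk m b)]
  | succ p ih =>
    intro m v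
    refine tendsto_nhds_unique (hrec (p + 1) i j (W m v)) ?_
    refine (((W m).continuous.tendsto _).comp (hrec p i j v)).congr fun M => ?_
    simp only [Function.comp_apply, map_sum]
    exact Finset.sum_congr rfl fun k _ => (ih _ _ m v).symm

theorem star_matrixUnit (ξ : HilbertBasis ℕ ℂ H) (n : ℕ → ℕ → ℕ)
    (e : ℕ → ℕ → ℕ → (H →L[ℂ] H))
    (h0 : ∀ i j k, e 0 i j (ξ k) = if k = j then ξ i else 0)
    (hrec : ∀ p i j, ∀ v : H, Filter.Tendsto
      (fun M => ∑ m ∈ Finset.range M, e p (n i m) (n j m) v)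
      Filter.atTop (nhds (e (p + 1) i j v))) (p i j : ℕ) :
    star (e p i j) = e p j i := by
  rw [ContinuousLinearMap.star_eq_adjoint]
  symm
  induction p generalizing i j with
  | zero =>
    have hd := Submodule.dense_iff_topologicalClosure_eq_top.mpr ξ.dense_span
    refine ContinuousLinearMap.ext_on hd ?_
    rintro _ ⟨k, rfl⟩
    refine ξ.repr.injective ?_
    ext l
    rw [ξ.repr_apply_apply, ξ.repr_apply_apply, ContinuousLinearMap.adjoint_inner_right, h0, h0]
    have ho := orthonormal_iff_ite.mp ξ.orthonormal
    split_ifs <;> simp [ho] <;> grind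
  | succ p ih =>
    rw [ContinuousLinearMap.eq_adjoint_iff]
    intro v w
    refine tendsto_nhds_unique ((hrec p j i v).inner (𝕜 := ℂ) tendsto_const_nhds) ?_
    refine (tendsto_const_nhds.inner (𝕜 := ℂ) (hrec p i j w)).congr fun M => ?_
    rw [sum_inner, inner_sum]
    refine Finset.sum_congr rfl fun m _ => ?_
    rw [ih, ContinuousLinearMap.adjoint_inner_right]

/-! ### `C` and `A` -/

theorem closure_Cset_subset {e : ℕ → ℕ → ℕ → (H →L[ℂ] H)}
    (he : ∀ p i j, e (p + 1) i j ∈ ampliation W) :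
    closure (⋃ p, Cset e p) ⊆ (ampliation W : Set (H →L[ℂ] H)) := by
  refine closure_minimal (Set.iUnion_subset fun p => ?_) (isClosed_ampliation W)
  have hK : ∀ p, Kset e (p + 1) ⊆ (ampliation W : Set (H →L[ℂ] H)) := fun p => by
    refine closure_minimal ?_ (isClosed_ampliation W)
    refine NonUnitalStarAlgebra.adjoin_le ?_
    rintro _ ⟨i, j, rfl⟩
    exact he p i j
  induction p with
  | zero =>
    rintro _ rfl
    exact zero_mem (ampliation W)
  | succ p ih =>
    rintro _ ⟨c, hc, k, hk, rfl⟩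
    exact add_mem (ih hc) (hK p hk)

theorem Aset_decomposition (e : ℕ → ℕ → ℕ → (H →L[ℂ] H)) (p : ℕ) :
    ∀ x ∈ Aset e p, ∃ c ∈ Cset e p, IsCompactOperator ⇑(x - c) := by
  induction p with
  | zero => exact fun x hx => ⟨0, rfl, by rw [sub_zero]; exact hx⟩
  | succ p ih =>
    rintro _ ⟨y, hy, k, hk, rfl⟩
    obtain ⟨c, hc, hyc⟩ := ih y hy
    refine ⟨c + k, Set.add_mem_add hc hk, ?_⟩
    simpa using hyc

theorem exists_decomposition (hP : IsPartition W) {e : ℕ → ℕ → ℕ → (H →L[ℂ] H)}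
    (he : ∀ p i j, e (p + 1) i j ∈ ampliation W) :
    ∀ x ∈ closure (⋃ p, Aset e p),
      ∃ c ∈ closure (⋃ p, Cset e p), IsCompactOperator ⇑(x - c) := by
  intro x hx
  obtain ⟨y, hy, hyx⟩ := mem_closure_iff_seq_limit.mp hx
  have hdec : ∀ k, ∃ c ∈ ⋃ p, Cset e p, IsCompactOperator ⇑(y k - c) := fun k => by
    obtain ⟨p, hp⟩ := Set.mem_iUnion.mp (hy k)
    obtain ⟨c, hc, h⟩ := Aset_decomposition e p _ hp
    exact ⟨c, Set.mem_iUnion.mpr ⟨p, hc⟩, h⟩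
  choose c hc hcomp using hdec
  have hmem : ∀ k, c k ∈ ampliation W := fun k => closure_Cset_subset he (subset_closure (hc k))
  have hdist : ∀ k l, dist (c k) (c l) ≤ dist (y k) (y l) := fun k l => by
    rw [dist_eq_norm, dist_eq_norm]
    have h := norm_le_norm_add hP (sub_mem (hmem k) (hmem l))
      (((hcomp k).asympNull hP).sub ((hcomp l).asympNull hP))
    rwa [show c k - c l + (y k - c k - (y l - c l)) = y k - y l by abel] at h
  have hcauchy : CauchySeq c := by
    have hyc := Metric.cauchySeq_iff.mp hyx.cauchySeq
    refine Metric.cauchySeq_iff.mpr fun ε hε => ?_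
    obtain ⟨N, hN⟩ := hyc ε hε
    exact ⟨N, fun k hk l hl => (hdist k l).trans_lt (hN k hk l hl)⟩
  obtain ⟨d, hd⟩ := cauchySeq_tendsto_of_complete hcauchy
  refine ⟨d, mem_closure_of_tendsto hd (Eventually.of_forall hc), ?_⟩
  exact isCompactOperator_of_tendsto (hyx.sub hd) (Eventually.of_forall hcomp)

end Ampliation

/-- with `A` the norm closure of `⋃ A_p` and `C` the norm closure of
`⋃_{p≥1} C_p`: `A_0 ∩ C = {0}`, the quotient map `A → A/A_0` is isometric on `C`
(`‖c + a‖ ≥ ‖c‖` for `c ∈ C`, `a ∈ A_0`), and every `x ∈ A` decomposes uniquely as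
`x = x⁰ + x^C` with `x⁰ ∈ A_0`, `x^C ∈ C`; the map `x ↦ x^C` is a `*`-homomorphism
with `‖x^C‖ ≤ ‖x‖` and `‖x⁰‖ ≤ 2‖x‖`. -/
theorem A0_inter_C_trivial_and_decomposition
    {H : Type*} [NormedAddCommGroup H] [InnerProductSpace ℂ H] [CompleteSpace H]
    (ξ : HilbertBasis ℕ ℂ H)
    (n : ℕ → ℕ → ℕ) (hmono : ∀ p, StrictMono (n p))
    (hdisj : ∀ p q, p ≠ q → ∀ k m, n p k ≠ n q m)
    (hcover : ∀ k, ∃ p m, n p m = k)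
    (e : ℕ → ℕ → ℕ → (H →L[ℂ] H))
    (h0 : ∀ i j k, e 0 i j (ξ k) = if k = j then ξ i else 0)
    (hrec : ∀ p i j, ∀ v : H, Filter.Tendsto
      (fun M => ∑ m ∈ Finset.range M, e p (n i m) (n j m) v)
      Filter.atTop (nhds (e (p + 1) i j v)))
    :
    (∀ x ∈ closure (⋃ p, Cset e p), IsCompactOperator ⇑x → x = 0) ∧
    (∀ c ∈ closure (⋃ p, Cset e p), ∀ a : H →L[ℂ] H, IsCompactOperator ⇑a →
      ‖c + a‖ ≥ ‖c‖) ∧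
    (∀ x ∈ closure (⋃ p, Aset e p),
      ∀ a : H →L[ℂ] H, IsCompactOperator ⇑a → ∀ a' : H →L[ℂ] H, IsCompactOperator ⇑a' →
      ∀ c ∈ closure (⋃ p, Cset e p), ∀ c' ∈ closure (⋃ p, Cset e p),
        x = a + c → x = a' + c' → a = a' ∧ c = c') ∧
    (∃ π : (H →L[ℂ] H) → (H →L[ℂ] H),
      (∀ x ∈ closure (⋃ p, Aset e p),
        π x ∈ closure (⋃ p, Cset e p) ∧ IsCompactOperator ⇑(x - π x)) ∧
      (∀ x ∈ closure (⋃ p, Aset e p), ∀ y ∈ closure (⋃ p, Aset e p),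
        π (x + y) = π x + π y ∧ π (x * y) = π x * π y) ∧
      (∀ c : ℂ, ∀ x ∈ closure (⋃ p, Aset e p), π (c • x) = c • π x) ∧
      (∀ x ∈ closure (⋃ p, Aset e p), π (star x) = star (π x)) ∧
      (∀ x ∈ closure (⋃ p, Aset e p), ‖π x‖ ≤ ‖x‖ ∧ ‖x - π x‖ ≤ 2 * ‖x‖)) := by
  have hinj : ∀ p, Function.Injective (n p) := fun p => (hmono p).injective
  have hcol : ∀ m, Function.Injective fun i => n i m := fun m i i' h => by
    by_contra hne
    exact hdisj i i' hne m m h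
  choose W hW using fun m => exists_isometry ξ (fun i => n i m) (hcol m)
  have hP : IsPartition W := hasSum_norm_sq_adjoint ξ n hinj hdisj hcover W hW
  have he : ∀ p i j, e (p + 1) i j ∈ ampliation W := fun p i j => by
    have hint := matrixUnit_intertwines ξ n hinj hdisj e h0 hrec hW
    refine ⟨e p i j, hint p i j, ?_⟩
    rw [star_matrixUnit ξ n e h0 hrec, star_matrixUnit ξ n e h0 hrec]
    exact hint p j i
  have hC := closure_Cset_subset he
  have hdec := exists_decomposition hP he
  have hiso : ∀ c ∈ closure (⋃ p, Cset e p), ∀ a : H →L[ℂ] H, IsCompactOperator ⇑a →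
      ‖c‖ ≤ ‖c + a‖ := fun c hc a ha => norm_le_norm_add hP (hC hc) (ha.asympNull hP)
  have hπ : ∀ x ∈ closure (⋃ p, Aset e p), diagPart W x ∈ closure (⋃ p, Cset e p) ∧
      IsCompactOperator ⇑(x - diagPart W x) := fun x hx => by
    obtain ⟨c, hc, hxc⟩ := hdec x hx
    rw [diagPart_eq hP (hC hc) (hxc.asympNull hP)]
    exact ⟨hc, hxc⟩
  have hnorm : ∀ x ∈ closure (⋃ p, Aset e p), ‖diagPart W x‖ ≤ ‖x‖ := fun x hx => by
    simpa using hiso _ (hπ x hx).1 _ (hπ x hx).2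
  refine ⟨fun x hx hcomp => ?_, hiso, ?_, diagPart W, hπ, ?_, ?_, ?_, ?_⟩
  · simpa using hiso x hx (-x) hcomp.neg
  · intro x _ a ha a' ha' c hc c' hc' h h'
    have hcc : c = c' := by
      refine eq_of_asympNull_sub hP (x := x) (hC hc) (hC hc') ?_ ?_
      · rw [h, add_sub_cancel_right]
        exact ha.asympNull hP
      · rw [h', add_sub_cancel_right]
        exact ha'.asympNull hP
    refine ⟨?_, hcc⟩
    rw [h, hcc] at h'
    exact add_right_cancel h'
  · intro x hx y hy
    obtain ⟨hxC, hxK⟩ := hπ x hx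
    obtain ⟨hyC, hyK⟩ := hπ y hy
    constructor
    · refine diagPart_eq hP (add_mem (hC hxC) (hC hyC)) ?_
      rw [add_sub_add_comm]
      exact (hxK.asympNull hP).add (hyK.asympNull hP)
    · refine diagPart_eq hP (mul_mem (hC hxC) (hC hyC)) ?_
      -- The product of the two compact parts is null because it is compact.
      have hab : IsCompactOperator ⇑((x - diagPart W x) * (y - diagPart W y)) :=
        hxK.comp_clm (y - diagPart W y)
      have hsum := ((hab.asympNull hP).add ((hxK.asympNull hP).mul_mem (hC hyC))).add
        ((hyK.asympNull hP).mem_mul (hC hxC))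
      convert hsum using 1
      noncomm_ring
  · intro z x hx
    refine diagPart_eq hP (SMulMemClass.smul_mem z (hC (hπ x hx).1)) ?_
    rw [← smul_sub]
    exact ((hπ x hx).2.asympNull hP).smul z
  · intro x hx
    refine diagPart_eq hP (star_mem (hC (hπ x hx).1)) ?_
    rw [← star_sub]
    exact ((hπ x hx).2.asympNull hP).star
  · intro x hx
    refine ⟨hnorm x hx, (norm_sub_le _ _).trans ?_⟩
    linarith [hnorm x hx]
end

section
/- For every t₀ ∈ [0,1] and every a ∈ A(t₀) there exists a norm-continuous function x : [0,1] → c₀(ℕ, A) such that x(t) ∈ A(t) for every t ∈ [0,1] and x(t₀) = a. (In other words, the family (A(t))_{t∈[0,1]} together with the continuous functions x : [0,1] → c₀(ℕ,A) satisfying x(t) ∈ A(t) for all t forms a full continuous field of C*-algebras.) -/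
/-!
The field is `x t n = φ n t • a n`, with continuous weights `φ n : [0,1] → [0,1]` such that
`φ n t₀ = 1` for all `n`, and `φ n (r n) = 0` whenever `r n ≠ t₀`. Then `x t₀ = a`, and
`x t ∈ A(t)` because for `r n = t` either the weight vanishes or `t = t₀` and `a n ∈ C`.
Norm continuity holds since `‖a n‖` is small outside a finite set of indices, where the bound
`|φ n s - φ n t| ≤ 1` suffices, while finitely many continuous weights are controlled near `t`
simultaneously.
-/

open ZeroAtInfty

namespace ContinuousFieldFullness

/-- The weight equal to `1` if `p = q`, and otherwise the continuous function of `t` with values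
in `[0,1]` that vanishes at `p` and equals `1` at `q`, linear in the distance to `p` and cut off
at `1`. -/
noncomputable def weight {X : Type*} [MetricSpace X] (p q t : X) : ℝ :=
  open Classical in if p = q then 1 else min 1 (dist t p / dist q p)

variable {X : Type*} [MetricSpace X]

lemma weight_nonneg (p q t : X) : 0 ≤ weight p q t := by
  unfold weight
  split_ifs
  · exact zero_le_one
  · positivity

lemma weight_le_one (p q t : X) : weight p q t ≤ 1 := by
  unfold weight
  split_ifs
  · exact le_rfl
  · exact min_le_left _ _

lemma weight_right (p q : X) : weight p q q = 1 := by
  unfold weight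
  split_ifs with h
  · rfl
  · have : dist q p ≠ 0 := dist_ne_zero.2 (Ne.symm h)
    simp [div_self this]

lemma weight_left {p q : X} (h : p ≠ q) : weight p q p = 0 := by
  simp [weight, h]

lemma continuous_weight (p q : X) : Continuous (weight p q) := by
  unfold weight
  split_ifs
  · exact continuous_const
  · fun_prop

variable {A : Type*} [NonUnitalCStarAlgebra A]

/-- The sequence `n ↦ weight (r n) t₀ t • a n` as an element of `c₀(ℕ, A)`. -/
noncomputable def field (r : ℕ → X) (a : C₀(ℕ, A)) (t₀ t : X) : C₀(ℕ, A) where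
  toFun n := (weight (r n) t₀ t : ℂ) • a n
  continuous_toFun := continuous_of_discreteTopology
  zero_at_infty' := by
    refine squeeze_zero_norm (fun n => ?_) (tendsto_zero_iff_norm_tendsto_zero.1 a.zero_at_infty')
    rw [norm_smul, Complex.norm_real, Real.norm_of_nonneg (weight_nonneg _ _ _)]
    exact mul_le_of_le_one_left (norm_nonneg _) (weight_le_one _ _ _)

lemma field_apply (r : ℕ → X) (a : C₀(ℕ, A)) (t₀ t : X) (n : ℕ) :
    field r a t₀ t n = (weight (r n) t₀ t : ℂ) • a n := rfl

lemma dist_field_apply (r : ℕ → X) (a : C₀(ℕ, A)) (t₀ s t : X) (n : ℕ) :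
    dist (field r a t₀ s n) (field r a t₀ t n)
      = |weight (r n) t₀ s - weight (r n) t₀ t| * ‖a n‖ := by
  rw [dist_eq_norm, field_apply, field_apply, ← sub_smul, norm_smul, ← Complex.ofReal_sub,
    Complex.norm_real, Real.norm_eq_abs]

lemma continuous_field (r : ℕ → X) (a : C₀(ℕ, A)) (t₀ : X) : Continuous (field r a t₀) := by
  rw [Metric.continuous_iff']
  intro t ε hε
  have hfin : {n | ¬ ‖a n‖ < ε / 2}.Finite := by
    have h := tendsto_zero_iff_norm_tendsto_zero.1 a.zero_at_infty'
    rw [Filter.cocompact_eq_cofinite] at h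
    exact Filter.eventually_cofinite.1 (h.eventually_lt_const (half_pos hε))
  have hev : ∀ᶠ s in nhds t, ∀ n ∈ {n | ¬ ‖a n‖ < ε / 2},
      |weight (r n) t₀ s - weight (r n) t₀ t| * ‖a n‖ < ε / 2 := by
    rw [Filter.eventually_all_finite hfin]
    intro n _
    have hc : Continuous fun s => |weight (r n) t₀ s - weight (r n) t₀ t| * ‖a n‖ :=
      ((continuous_weight _ _).sub continuous_const).abs.mul continuous_const
    refine hc.continuousAt.eventually_lt_const ?_
    simpa using hε
  filter_upwards [hev] with s hs
  refine lt_of_le_of_lt ?_ (half_lt_self hε)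
  rw [← ZeroAtInftyContinuousMap.dist_toBCF_eq_dist,
    BoundedContinuousFunction.dist_le (half_pos hε).le]
  intro n
  refine (dist_field_apply r a t₀ s t n).trans_le ?_
  by_cases hn : ‖a n‖ < ε / 2
  · refine (mul_le_of_le_one_left (norm_nonneg _) ?_).trans hn.le
    rw [abs_le]
    constructor <;> linarith [weight_nonneg (r n) t₀ s, weight_nonneg (r n) t₀ t,
      weight_le_one (r n) t₀ s, weight_le_one (r n) t₀ t]
  · exact (hs n hn).le

end ContinuousFieldFullness

/-- with `A(t) := {f ∈ c₀(ℕ, A) : f n ∈ C whenever r n = t}` for `t ∈ [0,1]`,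
every `a ∈ A(t₀)` is the value at `t₀` of a norm-continuous field `x : [0,1] → c₀(ℕ, A)`
with `x t ∈ A(t)` for all `t`; i.e. the family `(A(t))` is a full continuous field of
C*-algebras. -/
theorem continuous_field_fullness
    {A : Type*} [NonUnitalCStarAlgebra A]
    (C : NonUnitalStarSubalgebra ℂ A) (hC : IsClosed (C : Set A))
    (r : ℕ → Set.Icc (0 : ℝ) 1)
    (At : Set.Icc (0 : ℝ) 1 → Set C₀(ℕ, A))
    (hAt : ∀ t, At t = {f : C₀(ℕ, A) | ∀ n : ℕ, r n = t → f n ∈ C}) :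
    ∀ t₀ : Set.Icc (0 : ℝ) 1, ∀ a ∈ At t₀,
      ∃ x : Set.Icc (0 : ℝ) 1 → C₀(ℕ, A),
        Continuous x ∧ (∀ t, x t ∈ At t) ∧ x t₀ = a := by
  intro t₀ a ha
  rw [hAt] at ha
  refine ⟨ContinuousFieldFullness.field r a t₀,
    ContinuousFieldFullness.continuous_field r a t₀, fun t => ?_, ?_⟩
  · rw [hAt]
    rintro n rfl
    rw [ContinuousFieldFullness.field_apply]
    by_cases h : r n = t₀
    · exact C.smul_mem _ (ha n h)
    · rw [ContinuousFieldFullness.weight_left h, Complex.ofReal_zero, zero_smul]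
      exact C.zero_mem
  · ext n
    rw [ContinuousFieldFullness.field_apply, ContinuousFieldFullness.weight_right,
      Complex.ofReal_one, one_smul]
end
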